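/- arXiv:0810.2132 — 2 statements merged into one kernel-verified Lean document; each statement's English description precedes it below -/
import Mathlib

section
/- There is a constant C > 0, independent of A and p, such that for every continuous bilinear form A : c_0 × c_0 → ℂ and every 1 ≤ p ≤ 2, with q defined by 1/q = 1/2 + 1/p' (where 1/p + 1/p' = 1), one has (Σ_k (Σ_j |A(e_j, e_k)|^q)^{p/q})^{1/p} ≤ C · ‖A‖. In particular, taking p = 4/3 (so q = 4/3) one recovers Littlewood's theorem: (Σ_{j,k} |A(e_j,e_k)|^{4/3})^{3/4} ≤ C · ‖A‖. -/
open scoped BigOperators ENNReal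

/-- The canonical unit vectors of `c₀`, the space of complex sequences converging to `0`. -/
noncomputable def e (j : ℕ) : ZeroAtInftyContinuousMap ℕ ℂ where
  toFun := fun k => if k = j then 1 else 0
  continuous_toFun := continuous_of_discreteTopology
  zero_at_infty' := by
    have h : {j}ᶜ ∈ Filter.cocompact ℕ :=
      Filter.mem_cocompact.2 ⟨{j}, isCompact_singleton, by simp⟩
    refine Filter.Tendsto.congr' ?_ tendsto_const_nhds
    filter_upwards [h] with k hk
    simp only [Set.mem_compl_iff, Set.mem_singleton_iff] at hk
    simp [hk]

/-!
Averaging the form over random signs in the first variable and choosing the second variable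
optimally, Khinchine's inequality bounds `∑ₖ (∑ⱼ |aⱼₖ|²) ^ (1/2)` by `√3 ‖A‖`: this is the
case `p = 1`, `q = 2`. By symmetry the same bound holds with `j` and `k` exchanged, and Minkowski's
inequality turns it into the case `p = 2`, `q = 1`. Hölder's inequality, applied first in `j` and
then in `k`, interpolates between these two endpoints. All estimates are made on finite blocks of
the matrix, uniformly in the block, which also yields the summability.
-/

section Khinchine

open Finset

variable {ι : Type*}

lemma expect_pow_succ_sq_le {s : Finset ι} {f : ι → ℝ} (hf : ∀ i ∈ s, 0 ≤ f i) (n : ℕ) :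
    (𝔼 i ∈ s, f i ^ (n + 1)) ^ 2 ≤ (𝔼 i ∈ s, f i ^ n) * 𝔼 i ∈ s, f i ^ (n + 2) := by
  simp only [expect_eq_sum_div_card, div_pow, div_mul_div_comm, ← sq]
  gcongr
  exact sum_sq_le_sum_mul_sum_of_sq_le_mul s (fun i hi => pow_nonneg (hf i hi) n)
    (fun i hi => pow_nonneg (hf i hi) (n + 2)) fun i _ => by ring_nf; rfl

lemma expect_sq_pow_three_le {s : Finset ι} {f : ι → ℝ} (hf : ∀ i ∈ s, 0 ≤ f i) :
    (𝔼 i ∈ s, f i ^ 2) ^ 3 ≤ (𝔼 i ∈ s, f i) ^ 2 * 𝔼 i ∈ s, f i ^ 4 := by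
  have h_two : (𝔼 i ∈ s, f i ^ 2) ^ 2 ≤ (𝔼 i ∈ s, f i) * 𝔼 i ∈ s, f i ^ 3 := by
    simpa only [pow_one] using expect_pow_succ_sq_le hf 1
  have h_three : (𝔼 i ∈ s, f i ^ 3) ^ 2 ≤ (𝔼 i ∈ s, f i ^ 2) * 𝔼 i ∈ s, f i ^ 4 :=
    expect_pow_succ_sq_le hf 2
  have h_nonneg : 0 ≤ 𝔼 i ∈ s, f i ^ 2 := expect_nonneg fun i _ => sq_nonneg (f i)
  rcases h_nonneg.eq_or_lt with h_zero | h_pos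
  · rw [← h_zero, zero_pow three_ne_zero]
    exact mul_nonneg (sq_nonneg _) (expect_nonneg fun i hi => pow_nonneg (hf i hi) 4)
  refine le_of_mul_le_mul_right ?_ h_pos
  calc (𝔼 i ∈ s, f i ^ 2) ^ 3 * 𝔼 i ∈ s, f i ^ 2
      = ((𝔼 i ∈ s, f i ^ 2) ^ 2) ^ 2 := by ring
    _ ≤ ((𝔼 i ∈ s, f i) * 𝔼 i ∈ s, f i ^ 3) ^ 2 := by gcongr
    _ = (𝔼 i ∈ s, f i) ^ 2 * (𝔼 i ∈ s, f i ^ 3) ^ 2 := mul_pow _ _ 2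
    _ ≤ (𝔼 i ∈ s, f i) ^ 2 * ((𝔼 i ∈ s, f i ^ 2) * 𝔼 i ∈ s, f i ^ 4) := by gcongr
    _ = (𝔼 i ∈ s, f i) ^ 2 * (𝔼 i ∈ s, f i ^ 4) * 𝔼 i ∈ s, f i ^ 2 := by ring

variable [DecidableEq ι]

/-- The sign vector that is `1` on `u` and `-1` elsewhere. The subsets `u` of `s` correspond to the
choices of signs on `s`, so that the expectation over independent uniform signs indexed by `s` is
encoded as `𝔼 u ∈ s.powerset`. -/
def signVector (u : Finset ι) (i : ι) : ℝ :=
  if i ∈ u then 1 else -1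

lemma abs_signVector (u : Finset ι) (i : ι) : |signVector u i| = 1 := by
  unfold signVector
  split_ifs <;> simp

lemma expect_powerset_insert {s : Finset ι} {a : ι} (ha : a ∉ s) (f : Finset ι → ℝ) :
    𝔼 u ∈ (insert a s).powerset, f u = 𝔼 u ∈ s.powerset, (f (insert a u) + f u) / 2 := by
  simp only [expect_eq_sum_div_card, sum_powerset_insert ha, card_powerset,
    card_insert_of_notMem ha, ← sum_div, sum_add_distrib]
  push_cast
  ring

lemma expect_sum_signVector_smul_insert {E : Type*} [AddCommGroup E] [Module ℝ E] {s : Finset ι}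
    {a : ι} (ha : a ∉ s) (c : ι → E) (φ : E → ℝ) :
    𝔼 u ∈ (insert a s).powerset, φ (∑ i ∈ insert a s, signVector u i • c i) =
      𝔼 u ∈ s.powerset, (φ (∑ i ∈ s, signVector u i • c i + c a) +
        φ (∑ i ∈ s, signVector u i • c i - c a)) / 2 := by
  rw [expect_powerset_insert ha]
  refine expect_congr rfl fun u hu => ?_
  have hau : a ∉ u := fun h => ha (mem_powerset.1 hu h)
  have h_insert : ∑ i ∈ s, signVector (insert a u) i • c i = ∑ i ∈ s, signVector u i • c i :=
    sum_congr rfl fun i hi => by simp [signVector, ne_of_mem_of_not_mem hi ha]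
  rw [sum_insert ha, sum_insert ha, h_insert]
  simp [signVector, hau, sub_eq_add_neg, add_comm]

variable {E : Type*} [NormedAddCommGroup E] [InnerProductSpace ℝ E]

lemma expect_norm_sum_signVector_smul_sq (s : Finset ι) (c : ι → E) :
    𝔼 u ∈ s.powerset, ‖∑ i ∈ s, signVector u i • c i‖ ^ 2 = ∑ i ∈ s, ‖c i‖ ^ 2 := by
  induction s using Finset.induction with
  | empty => simp
  | insert a s ha ih =>
    have parallelogram (x : E) : (‖x + c a‖ ^ 2 + ‖x - c a‖ ^ 2) / 2 = ‖x‖ ^ 2 + ‖c a‖ ^ 2 := by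
      linarith [parallelogram_law_with_norm ℝ x (c a)]
    rw [expect_sum_signVector_smul_insert ha c fun x => ‖x‖ ^ 2]
    simp only [parallelogram, expect_add_distrib, ih, expect_const (powerset_nonempty s)]
    rw [sum_insert ha, add_comm]

lemma norm_add_pow_four_add_norm_sub_pow_four_le (x y : E) :
    (‖x + y‖ ^ 4 + ‖x - y‖ ^ 4) / 2 ≤ ‖x‖ ^ 4 + 6 * ‖y‖ ^ 2 * ‖x‖ ^ 2 + ‖y‖ ^ 4 := by
  have h_inner : inner ℝ x y ^ 2 ≤ (‖x‖ * ‖y‖) ^ 2 := sq_le_sq.2 <| by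
    simpa [abs_mul] using abs_real_inner_le_norm x y
  calc (‖x + y‖ ^ 4 + ‖x - y‖ ^ 4) / 2 = ((‖x + y‖ ^ 2) ^ 2 + (‖x - y‖ ^ 2) ^ 2) / 2 := by ring
    _ = (‖x‖ ^ 2 + ‖y‖ ^ 2) ^ 2 + 4 * inner ℝ x y ^ 2 := by
        rw [norm_add_sq_real, norm_sub_sq_real]; ring
    _ ≤ (‖x‖ ^ 2 + ‖y‖ ^ 2) ^ 2 + 4 * (‖x‖ * ‖y‖) ^ 2 := by gcongr
    _ = ‖x‖ ^ 4 + 6 * ‖y‖ ^ 2 * ‖x‖ ^ 2 + ‖y‖ ^ 4 := by ring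

lemma expect_norm_sum_signVector_smul_pow_four_le (s : Finset ι) (c : ι → E) :
    𝔼 u ∈ s.powerset, ‖∑ i ∈ s, signVector u i • c i‖ ^ 4 ≤ 3 * (∑ i ∈ s, ‖c i‖ ^ 2) ^ 2 := by
  induction s using Finset.induction with
  | empty => simp
  | insert a s ha ih =>
    rw [expect_sum_signVector_smul_insert ha c fun x => ‖x‖ ^ 4, sum_insert ha]
    refine (expect_le_expect fun u _ => norm_add_pow_four_add_norm_sub_pow_four_le _ _).trans ?_
    simp only [expect_add_distrib, ← mul_expect, expect_norm_sum_signVector_smul_sq,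
      expect_const (powerset_nonempty s)]
    nlinarith [sq_nonneg (‖c a‖ ^ 2)]

/-- **Khinchine's inequality**. Interpolating the second moment between the first and the fourth
gives the constant `√3`. -/
lemma sqrt_sum_norm_sq_le_expect_norm_sum_signVector_smul (s : Finset ι) (c : ι → E) :
    √(∑ i ∈ s, ‖c i‖ ^ 2) ≤ √3 * 𝔼 u ∈ s.powerset, ‖∑ i ∈ s, signVector u i • c i‖ := by
  set V := ∑ i ∈ s, ‖c i‖ ^ 2
  set m := 𝔼 u ∈ s.powerset, ‖∑ i ∈ s, signVector u i • c i‖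
  have hm : 0 ≤ m := expect_nonneg fun _ _ => norm_nonneg _
  have hV : 0 ≤ V := sum_nonneg fun _ _ => sq_nonneg _
  have h_moments : V ^ 3 ≤ m ^ 2 * (3 * V ^ 2) :=
    calc V ^ 3 ≤ m ^ 2 * 𝔼 u ∈ s.powerset, ‖∑ i ∈ s, signVector u i • c i‖ ^ 4 := by
          simpa only [expect_norm_sum_signVector_smul_sq] using
            expect_sq_pow_three_le (s := s.powerset) fun u _ =>
              norm_nonneg (∑ i ∈ s, signVector u i • c i)
      _ ≤ m ^ 2 * (3 * V ^ 2) := by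
          gcongr
          exact expect_norm_sum_signVector_smul_pow_four_le s c
  have h_sq : V ≤ 3 * m ^ 2 := by
    rcases hV.eq_or_lt with h_zero | h_pos
    · rw [← h_zero]
      positivity
    · exact le_of_mul_le_mul_right (by linarith) (pow_pos h_pos 2)
  calc √V ≤ √(3 * m ^ 2) := Real.sqrt_le_sqrt h_sq
    _ = √3 * m := by rw [Real.sqrt_mul (by norm_num), Real.sqrt_sq hm]

end Khinchine

section Interpolation

open Finset

variable {ι κ : Type*}

lemma sqrt_sum_sq_sum_le_sum_sqrt_sum_sq (s : Finset ι) (t : Finset κ) (f : ι → κ → ℝ) :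
    √(∑ k ∈ t, (∑ j ∈ s, f j k) ^ 2) ≤ ∑ j ∈ s, √(∑ k ∈ t, f j k ^ 2) := by
  have h_triangle := norm_sum_le s fun j => WithLp.toLp 2 fun k : t => f j k
  simpa [EuclideanSpace.norm_eq, sum_attach t fun k => (∑ j ∈ s, f j k) ^ 2,
    fun j => sum_attach t fun k => f j k ^ 2] using h_triangle

lemma sum_rpow_mul_rpow_le (s : Finset ι) {f g : ι → ℝ} (hf : ∀ i ∈ s, 0 ≤ f i)
    (hg : ∀ i ∈ s, 0 ≤ g i) {α β : ℝ} (hα : 0 ≤ α) (hβ : 0 ≤ β) (hαβ : α + β = 1) :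
    ∑ i ∈ s, f i ^ α * g i ^ β ≤ (∑ i ∈ s, f i) ^ α * (∑ i ∈ s, g i) ^ β := by
  rcases hα.eq_or_lt with rfl | hα
  · obtain rfl : β = 1 := by simpa using hαβ
    simp
  rcases hβ.eq_or_lt with rfl | hβ
  · obtain rfl : α = 1 := by simpa using hαβ
    simp
  refine (Real.inner_le_Lp_mul_Lq_of_nonneg s (Real.HolderConjugate.inv_inv hα hβ hαβ)
    (fun i hi => Real.rpow_nonneg (hf i hi) α)
    (fun i hi => Real.rpow_nonneg (hg i hi) β)).trans_eq ?_
  simp only [one_div, inv_inv]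
  congr 2 <;> refine sum_congr rfl fun i hi => ?_
  · exact Real.rpow_rpow_inv (hf i hi) hα.ne'
  · exact Real.rpow_rpow_inv (hg i hi) hβ.ne'

lemma sum_rpow_le_sum_sq_rpow_mul_sum_rpow (s : Finset ι) {f : ι → ℝ} (hf : ∀ i ∈ s, 0 ≤ f i)
    {q : ℝ} (hq1 : 1 ≤ q) (hq2 : q ≤ 2) :
    ∑ i ∈ s, f i ^ q ≤ (∑ i ∈ s, f i ^ 2) ^ (q - 1) * (∑ i ∈ s, f i) ^ (2 - q) := by
  have h_factor (i : ι) (hi : i ∈ s) : f i ^ q = (f i ^ 2) ^ (q - 1) * f i ^ (2 - q) := by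
    rw [← Real.rpow_two, ← Real.rpow_mul (hf i hi),
      ← Real.rpow_add_of_nonneg (hf i hi) (by linarith) (by linarith)]
    ring_nf
  rw [sum_congr rfl h_factor]
  exact sum_rpow_mul_rpow_le s (fun i _ => sq_nonneg (f i)) hf (by linarith) (by linarith) (by ring)

lemma div_eq_of_one_div_eq {p q : ℝ} (hp : p ≠ 0) (hpq : 1 / q = 1 / 2 + (1 - 1 / p)) :
    p / q = 3 / 2 * p - 1 := by
  rw [div_eq_mul_one_div, hpq]
  field_simp
  ring

lemma sum_rpow_rpow_div_le (s : Finset ι) {f : ι → ℝ} (hf : ∀ i ∈ s, 0 ≤ f i) {p q : ℝ}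
    (hp1 : 1 ≤ p) (hp2 : p ≤ 2) (hpq : 1 / q = 1 / 2 + (1 - 1 / p)) :
    (∑ i ∈ s, f i ^ q) ^ (p / q) ≤
      √(∑ i ∈ s, f i ^ 2) ^ (2 - p) * ((∑ i ∈ s, f i) ^ 2) ^ (p - 1) := by
  have hp0 : 0 < p := by linarith
  have h_div := div_eq_of_one_div_eq hp0.ne' hpq
  have h_div_pos : 0 < p / q := by linarith
  have hq0 : 0 < q := (div_pos_iff_of_pos_left hp0).1 h_div_pos
  have h_mul : q * (p / q) = p := mul_div_cancel₀ p hq0.ne'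
  have hq1 : 1 ≤ q := le_of_mul_le_mul_right (by linarith) h_div_pos
  have hq2 : q ≤ 2 := le_of_mul_le_mul_right (by linarith) h_div_pos
  have h_sq_nonneg : 0 ≤ ∑ i ∈ s, f i ^ 2 := sum_nonneg fun i _ => sq_nonneg (f i)
  have h_sum_nonneg : 0 ≤ ∑ i ∈ s, f i := sum_nonneg hf
  calc (∑ i ∈ s, f i ^ q) ^ (p / q)
      ≤ ((∑ i ∈ s, f i ^ 2) ^ (q - 1) * (∑ i ∈ s, f i) ^ (2 - q)) ^ (p / q) :=
        Real.rpow_le_rpow (sum_nonneg fun i hi => Real.rpow_nonneg (hf i hi) q)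
          (sum_rpow_le_sum_sq_rpow_mul_sum_rpow s hf hq1 hq2) h_div_pos.le
    _ = (∑ i ∈ s, f i ^ 2) ^ (1 / 2 * (2 - p)) * (∑ i ∈ s, f i) ^ (2 * (p - 1)) := by
        rw [Real.mul_rpow (by positivity) (by positivity), ← Real.rpow_mul h_sq_nonneg,
          ← Real.rpow_mul h_sum_nonneg]
        congr 2 <;> linarith
    _ = √(∑ i ∈ s, f i ^ 2) ^ (2 - p) * ((∑ i ∈ s, f i) ^ 2) ^ (p - 1) := by
        rw [Real.rpow_mul h_sq_nonneg, ← Real.sqrt_eq_rpow, Real.rpow_mul h_sum_nonneg,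
          Real.rpow_two]

lemma sum_sum_rpow_rpow_div_le (s : Finset ι) (t : Finset κ) {f : ι → κ → ℝ}
    (hf : ∀ j k, 0 ≤ f j k) {B : ℝ} (h_one_two : ∑ k ∈ t, √(∑ j ∈ s, f j k ^ 2) ≤ B)
    (h_two_one : √(∑ k ∈ t, (∑ j ∈ s, f j k) ^ 2) ≤ B) {p q : ℝ} (hp1 : 1 ≤ p) (hp2 : p ≤ 2)
    (hpq : 1 / q = 1 / 2 + (1 - 1 / p)) :
    ∑ k ∈ t, (∑ j ∈ s, f j k ^ q) ^ (p / q) ≤ B ^ p := by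
  have hB : 0 ≤ B := (Real.sqrt_nonneg _).trans h_two_one
  calc ∑ k ∈ t, (∑ j ∈ s, f j k ^ q) ^ (p / q)
      ≤ ∑ k ∈ t, √(∑ j ∈ s, f j k ^ 2) ^ (2 - p) * ((∑ j ∈ s, f j k) ^ 2) ^ (p - 1) :=
        sum_le_sum fun k _ => sum_rpow_rpow_div_le s (fun j _ => hf j k) hp1 hp2 hpq
    _ ≤ (∑ k ∈ t, √(∑ j ∈ s, f j k ^ 2)) ^ (2 - p) *
          (∑ k ∈ t, (∑ j ∈ s, f j k) ^ 2) ^ (p - 1) :=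
        sum_rpow_mul_rpow_le t (fun k _ => Real.sqrt_nonneg _) (fun k _ => sq_nonneg _)
          (by linarith) (by linarith) (by ring)
    _ ≤ B ^ (2 - p) * (B ^ 2) ^ (p - 1) := by
        gcongr
        exact (Real.sqrt_le_left hB).1 h_two_one
    _ = B ^ p := by
        rw [← Real.rpow_two, ← Real.rpow_mul hB,
          ← Real.rpow_add_of_nonneg hB (by linarith) (by linarith)]
        ring_nf

lemma summable_and_tsum_rpow_le_of_sum_le {f : ι → κ → ℝ} (hf : ∀ j k, 0 ≤ f j k) {r B : ℝ}
    (hr : 0 < r) (h : ∀ (s : Finset ι) (t : Finset κ), ∑ k ∈ t, (∑ j ∈ s, f j k) ^ r ≤ B) :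
    (∀ k, Summable fun j => f j k) ∧ (Summable fun k => (∑' j, f j k) ^ r) ∧
      ∑' k, (∑' j, f j k) ^ r ≤ B := by
  have h_inner (k : κ) : Summable fun j => f j k := by
    refine summable_of_sum_le (c := B ^ r⁻¹) (fun j => hf j k) fun s => ?_
    have hs : 0 ≤ ∑ j ∈ s, f j k := sum_nonneg fun j _ => hf j k
    have hsB : (∑ j ∈ s, f j k) ^ r ≤ B := by simpa using h s {k}
    exact (Real.le_rpow_inv_iff_of_pos hs ((Real.rpow_nonneg hs r).trans hsB) hr).2 hsB
  have h_outer (t : Finset κ) : ∑ k ∈ t, (∑' j, f j k) ^ r ≤ B :=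
    le_of_tendsto' (tendsto_finsetSum t fun k _ => (h_inner k).hasSum.rpow_const (.inr hr.le))
      fun s => h s t
  have h_nonneg (k : κ) : 0 ≤ (∑' j, f j k) ^ r := Real.rpow_nonneg (tsum_nonneg fun j => hf j k) r
  exact ⟨h_inner, summable_of_sum_le h_nonneg h_outer, Real.tsum_le_of_sum_le h_nonneg h_outer⟩

end Interpolation

section BilinearForms

open Finset

variable {ι κ 𝕜 : Type*} [RCLike 𝕜]

/-- The matrix `a` defines a bilinear form of norm at most `M` on finitely supported vectors with
the sup norm. The vectors `x` and `y` need not have finite support: they are truncated to `s` and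
`t`. -/
def BilinearBoundedBy (a : ι → κ → 𝕜) (M : ℝ) : Prop :=
  ∀ (s : Finset ι) (t : Finset κ) (x : ι → 𝕜) (y : κ → 𝕜), (∀ j, ‖x j‖ ≤ 1) → (∀ k, ‖y k‖ ≤ 1) →
    ‖∑ j ∈ s, ∑ k ∈ t, x j * y k * a j k‖ ≤ M

namespace BilinearBoundedBy

variable {a : ι → κ → 𝕜} {M : ℝ}

lemma nonneg (ha : BilinearBoundedBy a M) : 0 ≤ M := by
  simpa using ha ∅ ∅ 0 0 (by simp) (by simp)

lemma swap (ha : BilinearBoundedBy a M) : BilinearBoundedBy (fun k j => a j k) M := by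
  intro t s y x hy hx
  rw [sum_comm]
  simpa only [mul_comm (x _)] using ha s t x y hx hy

lemma sum_norm_sum_le (ha : BilinearBoundedBy a M) (s : Finset ι) (t : Finset κ) {x : ι → 𝕜}
    (hx : ∀ j, ‖x j‖ ≤ 1) : ∑ k ∈ t, ‖∑ j ∈ s, x j * a j k‖ ≤ M := by
  choose y hy_norm hy using fun k => RCLike.exists_norm_eq_mul_self (∑ j ∈ s, x j * a j k)
  have h_attained : ((∑ k ∈ t, ‖∑ j ∈ s, x j * a j k‖ : ℝ) : 𝕜) =
      ∑ j ∈ s, ∑ k ∈ t, x j * y k * a j k := by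
    rw [sum_comm, RCLike.ofReal_sum]
    refine sum_congr rfl fun k _ => ?_
    rw [hy k, mul_sum]
    exact sum_congr rfl fun j _ => by ring
  calc ∑ k ∈ t, ‖∑ j ∈ s, x j * a j k‖
      ≤ ‖((∑ k ∈ t, ‖∑ j ∈ s, x j * a j k‖ : ℝ) : 𝕜)‖ := by
        rw [RCLike.norm_ofReal]
        exact le_abs_self _
    _ ≤ M := by
        rw [h_attained]
        exact ha s t x y hx fun k => (hy_norm k).le

lemma sum_sqrt_sum_norm_sq_le (ha : BilinearBoundedBy a M) (s : Finset ι) (t : Finset κ) :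
    ∑ k ∈ t, √(∑ j ∈ s, ‖a j k‖ ^ 2) ≤ √3 * M := by
  classical
  have h_signs (u : Finset ι) : ∑ k ∈ t, ‖∑ j ∈ s, signVector u j • a j k‖ ≤ M := by
    simpa only [RCLike.real_smul_eq_coe_mul] using
      ha.sum_norm_sum_le s t (x := fun j => (signVector u j : 𝕜))
        fun j => by rw [RCLike.norm_ofReal, abs_signVector]
  calc ∑ k ∈ t, √(∑ j ∈ s, ‖a j k‖ ^ 2)
      ≤ ∑ k ∈ t, √3 * 𝔼 u ∈ s.powerset, ‖∑ j ∈ s, signVector u j • a j k‖ :=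
        sum_le_sum fun k _ => sqrt_sum_norm_sq_le_expect_norm_sum_signVector_smul s fun j => a j k
    _ = √3 * 𝔼 u ∈ s.powerset, ∑ k ∈ t, ‖∑ j ∈ s, signVector u j • a j k‖ := by
        rw [← mul_sum, expect_sum_comm]
    _ ≤ √3 * M := by
        gcongr
        exact expect_le (powerset_nonempty s) fun u _ => h_signs u

lemma sqrt_sum_sq_sum_norm_le (ha : BilinearBoundedBy a M) (s : Finset ι) (t : Finset κ) :
    √(∑ k ∈ t, (∑ j ∈ s, ‖a j k‖) ^ 2) ≤ √3 * M :=
  (sqrt_sum_sq_sum_le_sum_sqrt_sum_sq s t fun j k => ‖a j k‖).trans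
    (ha.swap.sum_sqrt_sum_norm_sq_le t s)

lemma summable_and_tsum_rpow_le (ha : BilinearBoundedBy a M) {p q : ℝ} (hp1 : 1 ≤ p) (hp2 : p ≤ 2)
    (hpq : 1 / q = 1 / 2 + (1 - 1 / p)) :
    (∀ k, Summable fun j => ‖a j k‖ ^ q) ∧ (Summable fun k => (∑' j, ‖a j k‖ ^ q) ^ (p / q)) ∧
      (∑' k, (∑' j, ‖a j k‖ ^ q) ^ (p / q)) ^ (1 / p) ≤ √3 * M := by
  have hp0 : 0 < p := by linarith
  have h_div_pos : 0 < p / q := by linarith [div_eq_of_one_div_eq hp0.ne' hpq]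
  have hB : 0 ≤ √3 * M := mul_nonneg (Real.sqrt_nonneg 3) ha.nonneg
  obtain ⟨h_inner, h_outer, h_le⟩ := summable_and_tsum_rpow_le_of_sum_le
    (fun j k => Real.rpow_nonneg (norm_nonneg (a j k)) q) h_div_pos fun s t =>
      sum_sum_rpow_rpow_div_le s t (fun j k => norm_nonneg (a j k))
        (ha.sum_sqrt_sum_norm_sq_le s t) (ha.sqrt_sum_sq_sum_norm_le s t) hp1 hp2 hpq
  refine ⟨h_inner, h_outer, ?_⟩
  rw [one_div]
  exact (Real.rpow_inv_le_iff_of_pos (by positivity) hB hp0).2 h_le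

lemma tsum_rpow_four_thirds_le (ha : BilinearBoundedBy a M) :
    (∑' jk : ι × κ, ‖a jk.1 jk.2‖ ^ (4 / 3 : ℝ)) ^ (3 / 4 : ℝ) ≤ √3 * M := by
  obtain ⟨h_inner, h_outer, h_le⟩ := ha.summable_and_tsum_rpow_le (p := 4 / 3) (q := 4 / 3)
    (by norm_num) (by norm_num) (by norm_num)
  norm_num only [div_self, Real.rpow_one] at h_outer h_le
  have h_summable : Summable fun kj : κ × ι => ‖a kj.2 kj.1‖ ^ (4 / 3 : ℝ) :=
    (summable_prod_of_nonneg fun _ => by positivity).2 ⟨h_inner, h_outer⟩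
  rw [← h_summable.tsum_prod, ← (Equiv.prodComm ι κ).tsum_eq] at h_le
  exact h_le

end BilinearBoundedBy

theorem littlewood_lp_lq_general {a : ι → κ → 𝕜} {M : ℝ} (ha : BilinearBoundedBy a M) :
    (∀ p q : ℝ, 1 ≤ p → p ≤ 2 → 1 / q = 1 / 2 + (1 - 1 / p) →
      (∀ k, Summable fun j => ‖a j k‖ ^ q) ∧
      (Summable fun k => (∑' j, ‖a j k‖ ^ q) ^ (p / q)) ∧
      (∑' k, (∑' j, ‖a j k‖ ^ q) ^ (p / q)) ^ (1 / p) ≤ √3 * M) ∧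
    (∑' jk : ι × κ, ‖a jk.1 jk.2‖ ^ ((4 : ℝ) / 3)) ^ ((3 : ℝ) / 4) ≤ √3 * M :=
  ⟨fun _ _ hp1 hp2 hpq => ha.summable_and_tsum_rpow_le hp1 hp2 hpq, ha.tsum_rpow_four_thirds_le⟩

lemma multilinear_sum_smul_sum_smul {R V W : Type*} [CommSemiring R] [AddCommMonoid V]
    [AddCommMonoid W] [Module R V] [Module R W] (A : MultilinearMap R (fun _ : Fin 2 => V) W)
    (s : Finset ι) (t : Finset κ) (x : ι → R) (y : κ → R) (v : ι → V) (w : κ → V) :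
    A ![∑ j ∈ s, x j • v j, ∑ k ∈ t, y k • w k] =
      ∑ j ∈ s, ∑ k ∈ t, (x j * y k) • A ![v j, w k] := by
  let B : V →ₗ[R] V →ₗ[R] W := LinearMap.mk₂ R (fun u z => A ![u, z])
    (fun u u' z => A.cons_add ![z] u u') (fun r u z => A.cons_smul ![z] r u)
    (fun u => (A.curryLeft u).cons_add ![]) (fun r u => (A.curryLeft u).cons_smul ![] r)
  change B _ _ = ∑ j ∈ s, ∑ k ∈ t, (x j * y k) • B (v j) (w k)
  simp only [map_sum, map_smul, LinearMap.sum_apply, LinearMap.smul_apply, smul_sum, mul_smul]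
  rw [sum_comm]
  exact sum_congr rfl fun j _ => sum_congr rfl fun k _ => smul_comm _ _ _

lemma norm_sum_smul_e_le (s : Finset ℕ) {x : ℕ → ℂ} {r : ℝ} (hr : 0 ≤ r)
    (hx : ∀ j ∈ s, ‖x j‖ ≤ r) : ‖∑ j ∈ s, x j • e j‖ ≤ r := by
  rw [← ZeroAtInftyContinuousMap.norm_toBCF_eq_norm, BoundedContinuousFunction.norm_le hr]
  intro i
  let eval : ZeroAtInftyContinuousMap ℕ ℂ →+ ℂ := ⟨⟨fun f => f i, rfl⟩, fun _ _ => rfl⟩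
  have h_eval : eval (∑ j ∈ s, x j • e j) = if i ∈ s then x i else 0 := by
    rw [map_sum]
    change ∑ j ∈ s, x j * (if i = j then 1 else 0) = _
    simp
  change ‖eval _‖ ≤ r
  rw [h_eval]
  split_ifs with hi
  · exact hx i hi
  · simpa using hr

lemma bilinearBoundedBy_opNorm
    (A : ContinuousMultilinearMap ℂ (fun _ : Fin 2 => ZeroAtInftyContinuousMap ℕ ℂ) ℂ) :
    BilinearBoundedBy (fun j k => A ![e j, e k]) ‖A‖ := by
  intro s t x y hx hy
  have h_expand : A ![∑ j ∈ s, x j • e j, ∑ k ∈ t, y k • e k] =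
      ∑ j ∈ s, ∑ k ∈ t, x j * y k * A ![e j, e k] :=
    multilinear_sum_smul_sum_smul A.toMultilinearMap s t x y e e
  calc ‖∑ j ∈ s, ∑ k ∈ t, x j * y k * A ![e j, e k]‖
      = ‖A ![∑ j ∈ s, x j • e j, ∑ k ∈ t, y k • e k]‖ := by rw [h_expand]
    _ ≤ ‖A‖ * (‖∑ j ∈ s, x j • e j‖ * ‖∑ k ∈ t, y k • e k‖) := by
        simpa [Fin.prod_univ_two] using A.le_opNorm ![∑ j ∈ s, x j • e j, ∑ k ∈ t, y k • e k]
    _ ≤ ‖A‖ * (1 * 1) := by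
        gcongr
        · exact norm_sum_smul_e_le s zero_le_one fun j _ => hx j
        · exact norm_sum_smul_e_le t zero_le_one fun k _ => hy k
    _ = ‖A‖ := by ring

end BilinearForms

/-- There is a constant `C > 0`, independent of `A` and `p`, such that for every continuous
bilinear form `A` on `c₀ × c₀` and `1 ≤ p ≤ 2`, with `1/q = 1/2 + 1/p'`, the matrix
`(A(e_j, e_k))` lies in `ℓ_p(ℓ_q)` with norm at most `C‖A‖`. In particular, for
`p = q = 4/3` one recovers Littlewood's 4/3 theorem. -/
theorem littlewood_lp_lq :
    ∃ C > 0, ∀ A : ContinuousMultilinearMap ℂ (fun _ : Fin 2 => ZeroAtInftyContinuousMap ℕ ℂ) ℂ,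
      (∀ p q : ℝ, 1 ≤ p → p ≤ 2 → 1 / q = 1 / 2 + (1 - 1 / p) →
        (∀ k, Summable fun j => ‖A ![e j, e k]‖ ^ q) ∧
        (Summable fun k => (∑' j, ‖A ![e j, e k]‖ ^ q) ^ (p / q)) ∧
        (∑' k, (∑' j, ‖A ![e j, e k]‖ ^ q) ^ (p / q)) ^ (1 / p) ≤ C * ‖A‖) ∧
      (∑' jk : ℕ × ℕ, ‖A ![e jk.1, e jk.2]‖ ^ ((4 : ℝ) / 3)) ^ ((3 : ℝ) / 4) ≤ C * ‖A‖ :=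
  ⟨√3, by positivity, fun A => littlewood_lp_lq_general (bilinearBoundedBy_opNorm A)⟩
end

section
/- Let E_1, …, E_n be Banach spaces of cotype 2. Then for every Banach space F, a continuous n-linear map A : E_1 × ⋯ × E_n → F is absolutely (1/n;1,…,1)-summing if and only if it is absolutely (2/n;2,…,2)-summing. -/
open scoped BigOperators NNReal ENNReal

/-- The weak `ℓ_r` norm of a finite family `(x_j)` in a normed space:
`sup_{‖φ‖ ≤ 1} (∑_j ‖φ(x_j)‖^r)^(1/r)`. -/
noncomputable def weakNorm (𝕜 : Type*) [RCLike 𝕜] {E : Type*} [NormedAddCommGroup E]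
    [NormedSpace 𝕜 E] (r : ℝ) {m : ℕ} (x : Fin m → E) : ℝ :=
  ⨆ φ : {φ : E →L[𝕜] 𝕜 // ‖φ‖ ≤ 1}, (∑ j, ‖φ.1 (x j)‖ ^ r) ^ (1 / r)

/-- The Rademacher norm of a finite family `(x_j)_{j=1}^m` in a normed space:
`(2^{-m} ∑_{ε ∈ {-1,1}^m} ‖∑_j ε_j x_j‖²)^{1/2}`. -/
noncomputable def radNorm {E : Type*} [NormedAddCommGroup E] {m : ℕ} (x : Fin m → E) : ℝ :=
  ((∑ ε : Fin m → Bool, ‖∑ j, (if ε j then x j else -x j)‖ ^ 2) / (2 : ℝ) ^ m) ^ ((1 : ℝ) / 2)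

/-- A continuous multilinear map is absolutely `(p; p₁, …, pₙ)`-summing. -/
def IsAbsSumming {𝕜 : Type*} [RCLike 𝕜] {n : ℕ} {E : Fin n → Type*}
    [∀ i, NormedAddCommGroup (E i)] [∀ i, NormedSpace 𝕜 (E i)]
    {F : Type*} [NormedAddCommGroup F] [NormedSpace 𝕜 F]
    (p : ℝ) (ps : Fin n → ℝ) (A : ContinuousMultilinearMap 𝕜 E F) : Prop :=
  ∃ C > 0, ∀ (m : ℕ) (x : ∀ i, Fin m → E i),
    (∑ j, ‖A (fun i => x i j)‖ ^ p) ^ (1 / p) ≤ C * ∏ i, weakNorm 𝕜 (ps i) (x i)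

/-- A Banach space has cotype 2. -/
def HasCotype2 (X : Type*) [NormedAddCommGroup X] : Prop :=
  ∃ C > 0, ∀ (m : ℕ) (x : Fin m → X),
    (∑ j, ‖x j‖ ^ 2) ^ ((1 : ℝ) / 2) ≤ C * radNorm x

/-! The Hölder relation `n = n/2 + n · 1/2` between the exponents reduces both implications to
factoring families. Multiplying the `i`-th family by scalars in `ℓ_2` turns a weakly `ℓ_2` family
into a weakly `ℓ_1` one, and choosing these scalars as powers of `‖A(x_j)‖` shows that
`(1/n; 1, …, 1)`-summability implies `(2/n; 2, …, 2)`-summability. For the converse, in a space of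
cotype 2 every weakly `ℓ_1` family is the product of an `ℓ_2` sequence of scalars with a weakly
`ℓ_2` family.

This factorization comes from the Pietsch measure of the operator `ℓ_∞^m → E` carrying the unit
vectors to the family, once this operator is 2-summing with a bound independent of `m`. The
2-summing bound improves itself: domination in `L_2(μ)` and boundedness on `ℓ_∞` interpolate to a
bound in `L_4(μ)`, in which Rademacher averages are comparable with square functions, so that
cotype 2 returns a 2-summing bound of the order of the square root of the previous one. -/

section Rademacher

/-- The signed sum `∑ₖ ±zₖ` of a finite family, the signs being encoded by booleans. -/
def signedSum {M : Type*} [AddCommGroup M] {N : ℕ} (ε : Fin N → Bool) (z : Fin N → M) : M :=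
  ∑ k, if ε k then z k else -z k

variable {M : Type*} [AddCommGroup M] {N : ℕ}

lemma signedSum_cons_true (ε : Fin N → Bool) (z : Fin (N + 1) → M) :
    signedSum (Fin.cons true ε) z = signedSum ε (Fin.tail z) + z 0 := by
  simp [signedSum, Fin.sum_univ_succ, Fin.tail, add_comm]

lemma signedSum_cons_false (ε : Fin N → Bool) (z : Fin (N + 1) → M) :
    signedSum (Fin.cons false ε) z = signedSum ε (Fin.tail z) - z 0 := by
  simp [signedSum, Fin.sum_univ_succ, Fin.tail, sub_eq_neg_add]

lemma map_signedSum {M' G : Type*} [AddCommGroup M'] [FunLike G M M'] [AddMonoidHomClass G M M']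
    (f : G) (ε : Fin N → Bool) (z : Fin N → M) :
    f (signedSum ε z) = signedSum ε fun k ↦ f (z k) := by
  simp only [signedSum, map_sum, apply_ite f, map_neg]

lemma signedSum_apply {ι : Type*} (ε : Fin N → Bool) (a : Fin N → ι → M) (j : ι) :
    signedSum ε a j = signedSum ε fun k ↦ a k j :=
  map_signedSum (Pi.evalAddMonoidHom (fun _ : ι ↦ M) j) ε a

lemma expect_cons_bool (g : (Fin (N + 1) → Bool) → ℝ) :
    𝔼 ε, g ε = 𝔼 ε : Fin N → Bool, (g (Fin.cons true ε) + g (Fin.cons false ε)) / 2 := by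
  simp only [Fintype.expect_eq_sum_div_card, Fintype.card_pi_const, Fintype.card_bool]
  rw [← (Fin.consEquiv fun _ ↦ Bool).sum_comp, Fintype.sum_prod_type]
  simp only [Fintype.sum_bool, ← Finset.sum_div, Finset.sum_add_distrib, div_div, pow_succ']
  push_cast
  rfl

variable {H : Type*} [NormedAddCommGroup H]

lemma norm_add_pow_four_add_norm_sub_pow_four_le_s4 (𝕜 : Type*) [RCLike 𝕜] [InnerProductSpace 𝕜 H]
    (v w : H) :
    ‖v + w‖ ^ 4 + ‖v - w‖ ^ 4 ≤ 2 * ‖v‖ ^ 4 + 12 * ‖w‖ ^ 2 * ‖v‖ ^ 2 + 2 * ‖w‖ ^ 4 := by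
  have hsum : ‖v + w‖ ^ 2 + ‖v - w‖ ^ 2 = 2 * (‖v‖ ^ 2 + ‖w‖ ^ 2) := by
    linarith [parallelogram_law_with_norm 𝕜 v w]
  have hadd : ‖v + w‖ ^ 2 ≤ (‖v‖ + ‖w‖) ^ 2 := by gcongr; exact norm_add_le v w
  have hsub : ‖v - w‖ ^ 2 ≤ (‖v‖ + ‖w‖) ^ 2 := by gcongr; exact norm_sub_le v w
  have hdiff : (‖v + w‖ ^ 2 - ‖v - w‖ ^ 2) ^ 2 ≤ (4 * ‖v‖ * ‖w‖) ^ 2 := by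
    apply sq_le_sq' <;> linarith
  linarith [congrArg (· ^ 2) hsum]

lemma expect_norm_signedSum_sq (𝕜 : Type*) [RCLike 𝕜] [InnerProductSpace 𝕜 H] (a : Fin N → H) :
    𝔼 ε, ‖signedSum ε a‖ ^ 2 = ∑ k, ‖a k‖ ^ 2 := by
  induction N with
  | zero => simp [signedSum]
  | succ N ih =>
    calc 𝔼 ε, ‖signedSum ε a‖ ^ 2
        = 𝔼 ε : Fin N → Bool, (‖signedSum ε (Fin.tail a)‖ ^ 2 + ‖a 0‖ ^ 2) := by
          rw [expect_cons_bool]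
          refine Finset.expect_congr rfl fun ε _ ↦ ?_
          rw [signedSum_cons_true, signedSum_cons_false]
          linarith [parallelogram_law_with_norm 𝕜 (signedSum ε (Fin.tail a)) (a 0)]
      _ = ∑ k, ‖a k‖ ^ 2 := by
          rw [Finset.expect_add_distrib, ih, Fintype.expect_const, Fin.sum_univ_succ, add_comm]
          rfl

lemma expect_norm_signedSum_pow_four_le (𝕜 : Type*) [RCLike 𝕜] [InnerProductSpace 𝕜 H]
    (a : Fin N → H) :
    𝔼 ε, ‖signedSum ε a‖ ^ 4 ≤ 3 * (∑ k, ‖a k‖ ^ 2) ^ 2 := by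
  induction N with
  | zero => simp [signedSum]
  | succ N ih =>
    set σ := ∑ k, ‖Fin.tail a k‖ ^ 2
    calc 𝔼 ε, ‖signedSum ε a‖ ^ 4
        ≤ 𝔼 ε : Fin N → Bool, (‖signedSum ε (Fin.tail a)‖ ^ 4
            + 6 * ‖a 0‖ ^ 2 * ‖signedSum ε (Fin.tail a)‖ ^ 2 + ‖a 0‖ ^ 4) := by
          rw [expect_cons_bool]
          refine Finset.expect_le_expect fun ε _ ↦ ?_
          rw [signedSum_cons_true, signedSum_cons_false]
          linarith [norm_add_pow_four_add_norm_sub_pow_four_le_s4 𝕜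
            (signedSum ε (Fin.tail a)) (a 0)]
      _ ≤ 3 * σ ^ 2 + 6 * ‖a 0‖ ^ 2 * σ + ‖a 0‖ ^ 4 := by
          rw [Finset.expect_add_distrib, Finset.expect_add_distrib, ← Finset.mul_expect,
            expect_norm_signedSum_sq 𝕜, Fintype.expect_const]
          gcongr
          exact ih (Fin.tail a)
      _ ≤ 3 * (‖a 0‖ ^ 2 + σ) ^ 2 := by nlinarith [sq_nonneg (‖a 0‖ ^ 2)]
      _ = 3 * (∑ k, ‖a k‖ ^ 2) ^ 2 := by rw [Fin.sum_univ_succ]; rfl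

/-- The space `X` has cotype 2 with constant `√C`, the Rademacher average being written as an
expectation over all choices of signs. -/
def IsCotype2Bound (X : Type*) [NormedAddCommGroup X] (C : ℝ) : Prop :=
  ∀ (N : ℕ) (z : Fin N → X), ∑ k, ‖z k‖ ^ 2 ≤ C * 𝔼 ε, ‖signedSum ε z‖ ^ 2

lemma radNorm_eq_sqrt (z : Fin N → H) : radNorm z = √(𝔼 ε, ‖signedSum ε z‖ ^ 2) := by
  rw [Fintype.expect_eq_sum_div_card, Real.sqrt_eq_rpow]
  simp [radNorm, signedSum]

lemma HasCotype2.exists_isCotype2Bound (h : HasCotype2 H) : ∃ C > 0, IsCotype2Bound H C := by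
  obtain ⟨C, hC, h⟩ := h
  refine ⟨C ^ 2, by positivity, fun N z ↦ ?_⟩
  have hz := h N z
  rw [← Real.sqrt_eq_rpow, radNorm_eq_sqrt] at hz
  rw [← Real.sqrt_le_sqrt_iff
    (mul_nonneg (sq_nonneg C) (Finset.expect_nonneg fun _ _ ↦ by positivity)),
    Real.sqrt_mul (sq_nonneg C), Real.sqrt_sq hC.le]
  exact hz

end Rademacher

section TwoSumming

lemma map_nonneg_of_forall_nonpos_map_le {V : Type*} [AddCommGroup V] [PartialOrder V]
    [IsOrderedAddMonoid V] [Module ℝ V] [PosSMulMono ℝ V] {f : V →ₗ[ℝ] ℝ} {u : ℝ}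
    (hf : ∀ v ≤ 0, f v ≤ u) {v : V} (hv : 0 ≤ v) : 0 ≤ f v := by
  by_contra! hneg
  have hu : 0 ≤ u := by simpa using hf 0 le_rfl
  have hle := hf (((u + 1) / f v) • v) (smul_nonpos_of_nonpos_of_nonneg
    (div_nonpos_of_nonneg_of_nonpos (by positivity) hneg.le) hv)
  rw [map_smul, smul_eq_mul, div_mul_cancel₀ _ hneg.ne] at hle
  linarith

/-- The weights are the normalized coefficients of a hyperplane separating `T` from the open
negative orthant. -/
lemma exists_mem_stdSimplex_forall_sum_mul_nonneg {ι : Type*} [Fintype ι] {T : Set (ι → ℝ)}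
    (hTc : Convex ℝ T) (hTne : T.Nonempty) (hT : ∀ v ∈ T, ∃ j, 0 ≤ v j) :
    ∃ μ ∈ stdSimplex ℝ ι, ∀ v ∈ T, 0 ≤ ∑ j, μ j * v j := by
  classical
  obtain ⟨v₀, hv₀⟩ := hTne
  let S : Set (ι → ℝ) := Set.univ.pi fun _ ↦ Set.Iio 0
  have hST : Disjoint S T := by
    refine Set.disjoint_left.2 fun v hvS hvT ↦ ?_
    obtain ⟨j, hj⟩ := hT v hvT
    exact hj.not_gt (hvS j (Set.mem_univ j))
  obtain ⟨f, u, hfS, hfT⟩ := geometric_hahn_banach_open (convex_pi fun _ _ ↦ convex_Iio 0)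
    (isOpen_set_pi Set.finite_univ fun _ _ ↦ isOpen_Iio) hTc hST
  have hf_nonpos : ∀ v ≤ 0, f v ≤ u := fun v hv ↦ by
    have hvS : v ∈ closure S := by
      rw [closure_pi_set]
      intro j _
      rw [closure_Iio]
      exact hv j
    exact closure_minimal (fun w hw ↦ (hfS w hw).le) (isClosed_Iic.preimage f.continuous) hvS
  have hu : 0 ≤ u := by simpa using hf_nonpos 0 le_rfl
  set c : ι → ℝ := fun j ↦ f (Pi.single j 1)
  have hf : ∀ v, f v = ∑ j, c j * v j := fun v ↦ by
    conv_lhs => rw [pi_eq_sum_univ' v]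
    simp [c, mul_comm]
  have hc : ∀ j, 0 ≤ c j := fun j ↦
    map_nonneg_of_forall_nonpos_map_le (f := (f : (ι → ℝ) →ₗ[ℝ] ℝ)) hf_nonpos
      (Pi.single_nonneg.2 zero_le_one)
  have hcsum : 0 < ∑ j, c j := by
    have hneg : f (-1) < f v₀ := (hfS _ fun j _ ↦ by simp).trans_le (hfT v₀ hv₀)
    refine (Finset.sum_nonneg fun j _ ↦ hc j).lt_of_ne' fun hsum ↦ hneg.ne ?_
    have hc0 : ∀ j, c j = 0 := by
      simpa [Finset.sum_eq_zero_iff_of_nonneg fun j _ ↦ hc j] using hsum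
    simp only [hf, hc0, zero_mul]
  refine ⟨fun j ↦ c j / ∑ i, c i, ⟨fun j ↦ div_nonneg (hc j) hcsum.le, ?_⟩, fun v hv ↦ ?_⟩
  · rw [← Finset.sum_div, div_self hcsum.ne']
  · simp_rw [div_mul_eq_mul_div, ← Finset.sum_div, ← hf]
    exact div_nonneg (hu.trans (hfT v hv)) hcsum.le

lemma exists_norm_eq_apply {ι : Type*} [Fintype ι] [Nonempty ι] {w : ι → ℝ}
    (hw : ∀ j, 0 ≤ w j) : ∃ j, ‖w‖ = w j := by
  obtain ⟨j, hj⟩ := Finite.exists_max w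
  refine ⟨j, le_antisymm ((pi_norm_le_iff_of_nonneg (hw j)).2 fun i ↦ ?_)
    ((le_abs_self _).trans (norm_le_pi_norm w j))⟩
  rw [Real.norm_of_nonneg (hw i)]
  exact hj i

lemma sq_norm_le_sum_sq_norm {ι G : Type*} [Fintype ι] [SeminormedAddCommGroup G] (a : ι → G) :
    ‖a‖ ^ 2 ≤ ∑ j, ‖a j‖ ^ 2 := by
  rw [← Real.le_sqrt (norm_nonneg a) (by positivity)]
  refine (pi_norm_le_iff_of_nonneg (Real.sqrt_nonneg _)).2 fun j ↦ ?_
  rw [Real.le_sqrt (norm_nonneg (a j)) (by positivity)]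
  exact Finset.single_le_sum (f := fun j ↦ ‖a j‖ ^ 2) (fun i _ ↦ by positivity)
    (Finset.mem_univ j)

variable {𝕜 : Type*} [RCLike 𝕜] {ι : Type*} {E : Type*} [NormedAddCommGroup E]
  [NormedSpace 𝕜 E]

/-- The vector `Q ∑ₖ |aₖ|² - ∑ₖ ‖U aₖ‖²` attached to a finite family `(aₖ)`. Pietsch's separation
argument applies to the set of all such vectors. -/
def deficiency (U : (ι → 𝕜) →L[𝕜] E) (Q : ℝ) {N : ℕ} (a : Fin N → ι → 𝕜) (j : ι) : ℝ :=
  Q * ∑ k, ‖a k j‖ ^ 2 - ∑ k, ‖U (a k)‖ ^ 2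

/-- Families can be rescaled by `√t` and concatenated. -/
lemma convex_range_deficiency (U : (ι → 𝕜) →L[𝕜] E) (Q : ℝ) :
    Convex ℝ (Set.range fun a : Σ N, Fin N → ι → 𝕜 ↦ deficiency U Q a.2) := by
  have hsmul : ∀ t : ℝ, 0 ≤ t → ∀ N (a : Fin N → ι → 𝕜),
      deficiency U Q (((√t : ℝ) : 𝕜) • a) = t • deficiency U Q a := by
    intro t ht N a
    ext j
    simp only [deficiency, Pi.smul_apply, map_smul, norm_smul, RCLike.norm_ofReal, mul_pow,
      sq_abs, Real.sq_sqrt ht, ← Finset.mul_sum, smul_eq_mul, norm_mul]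
    ring
  have hadd : ∀ N N' (a : Fin N → ι → 𝕜) (a' : Fin N' → ι → 𝕜),
      deficiency U Q (Fin.append a a') = deficiency U Q a + deficiency U Q a' := by
    intro N N' a a'
    ext j
    simp only [deficiency, Fin.sum_univ_add, Fin.append_left, Fin.append_right, Pi.add_apply]
    ring
  rintro _ ⟨⟨N, a⟩, rfl⟩ _ ⟨⟨N', a'⟩, rfl⟩ s t hs ht -
  exact ⟨⟨N + N', Fin.append (((√s : ℝ) : 𝕜) • a) (((√t : ℝ) : 𝕜) • a')⟩,
    by simp only [hadd, hsmul s hs, hsmul t ht]⟩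

variable [Fintype ι]

/-- The operator `U : ℓ_∞^ι → E` is absolutely 2-summing with constant `√Q`. The squared weak
`ℓ_2` norm of a family `(aₖ)` in `ℓ_∞^ι` is written as the supremum norm of `∑ₖ |aₖ|²`: by
convexity it is attained at a coordinate functional. -/
def IsTwoSummingBound (U : (ι → 𝕜) →L[𝕜] E) (Q : ℝ) : Prop :=
  ∀ (N : ℕ) (a : Fin N → ι → 𝕜), ∑ k, ‖U (a k)‖ ^ 2 ≤ Q * ‖fun j ↦ ∑ k, ‖a k j‖ ^ 2‖

/-- The probability vector `μ` is a Pietsch measure for `U : ℓ_∞^ι → E`: the operator is bounded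
by `√Q` for the norm of `L_2(μ)`. -/
def IsPietschMeasure (U : (ι → 𝕜) →L[𝕜] E) (Q : ℝ) (μ : ι → ℝ) : Prop :=
  μ ∈ stdSimplex ℝ ι ∧ ∀ a, ‖U a‖ ^ 2 ≤ Q * ∑ j, μ j * ‖a j‖ ^ 2

variable {U : (ι → 𝕜) →L[𝕜] E} {Q Q' C : ℝ} {μ : ι → ℝ}

lemma IsTwoSummingBound.mono (h : IsTwoSummingBound U Q) (hQ : Q ≤ Q') :
    IsTwoSummingBound U Q' :=
  fun N a ↦ (h N a).trans (by gcongr)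

variable (U) in
lemma isTwoSummingBound_card_mul_sq_norm :
    IsTwoSummingBound U (Fintype.card ι * ‖U‖ ^ 2) := by
  intro N a
  set w : ι → ℝ := fun j ↦ ∑ k, ‖a k j‖ ^ 2
  have hU : ∀ k, ‖U (a k)‖ ^ 2 ≤ ‖U‖ ^ 2 * ∑ j, ‖a k j‖ ^ 2 := fun k ↦ by
    calc ‖U (a k)‖ ^ 2 ≤ ‖U‖ ^ 2 * ‖a k‖ ^ 2 := by
          rw [← mul_pow]; gcongr; exact U.le_opNorm _
      _ ≤ ‖U‖ ^ 2 * ∑ j, ‖a k j‖ ^ 2 := by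
          gcongr
          exact sq_norm_le_sum_sq_norm (a k)
  calc ∑ k, ‖U (a k)‖ ^ 2 ≤ ∑ k, ‖U‖ ^ 2 * ∑ j, ‖a k j‖ ^ 2 := Finset.sum_le_sum fun k _ ↦ hU k
    _ = ‖U‖ ^ 2 * ∑ j, w j := by rw [← Finset.mul_sum, Finset.sum_comm]
    _ ≤ ‖U‖ ^ 2 * ∑ _j : ι, ‖w‖ := by
        gcongr with j
        exact (le_abs_self _).trans (norm_le_pi_norm w j)
    _ = Fintype.card ι * ‖U‖ ^ 2 * ‖w‖ := by simp; ring

variable (U) in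
lemma exists_isLeast_isTwoSummingBound : ∃ Q, IsLeast {Q | 0 ≤ Q ∧ IsTwoSummingBound U Q} Q := by
  refine ⟨_, IsClosed.isLeast_csInf ?_
    ⟨_, by positivity, isTwoSummingBound_card_mul_sq_norm U⟩ ⟨0, fun Q hQ ↦ hQ.1⟩⟩
  simp only [IsTwoSummingBound, Set.ofPred_and, Set.ofPred_forall]
  refine isClosed_Ici.inter (isClosed_iInter fun N ↦ isClosed_iInter fun a ↦ ?_)
  exact isClosed_le continuous_const (by fun_prop)

/-- **Pietsch domination.** Being 2-summing says that each deficiency vector has a nonnegative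
entry. -/
lemma IsTwoSummingBound.exists_isPietschMeasure [Nonempty ι] (h : IsTwoSummingBound U Q) :
    ∃ μ, IsPietschMeasure U Q μ := by
  obtain ⟨μ, hμ, hμT⟩ := exists_mem_stdSimplex_forall_sum_mul_nonneg
    (convex_range_deficiency U Q) ⟨_, ⟨0, 0⟩, rfl⟩ <| by
      rintro _ ⟨⟨N, a⟩, rfl⟩
      obtain ⟨j, hj⟩ := exists_norm_eq_apply (w := fun j ↦ ∑ k, ‖a k j‖ ^ 2)
        fun j ↦ by positivity
      exact ⟨j, sub_nonneg.2 ((h N a).trans_eq (by rw [hj]))⟩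
  refine ⟨μ, hμ, fun a ↦ ?_⟩
  have ha := hμT _ ⟨⟨1, fun _ ↦ a⟩, rfl⟩
  simp only [deficiency, Fin.sum_univ_one, mul_sub, Finset.sum_sub_distrib, ← Finset.sum_mul,
    hμ.2, one_mul, mul_left_comm _ Q, ← Finset.mul_sum] at ha
  exact sub_nonneg.1 ha

/-- The part of `a` below `s` is controlled by `‖U‖`, the part above it by the Pietsch measure. -/
lemma IsPietschMeasure.mul_norm_apply_le (h : IsPietschMeasure U Q μ) (hQ : 0 ≤ Q) {s : ℝ}
    (hs : 0 ≤ s) (a : ι → 𝕜) :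
    s * ‖U a‖ ≤ ‖U‖ * s ^ 2 + √(Q * ∑ j, μ j * ‖a j‖ ^ 4) := by
  set b : ι → 𝕜 := fun j ↦ if ‖a j‖ ≤ s then 0 else a j
  have hsmall : ‖U (a - b)‖ ≤ ‖U‖ * s := by
    refine U.le_opNorm_of_le ((pi_norm_le_iff_of_nonneg hs).2 fun j ↦ ?_)
    by_cases hj : ‖a j‖ ≤ s <;> simp [b, hj, hs]
  have hb : s ^ 2 * ∑ j, μ j * ‖b j‖ ^ 2 ≤ ∑ j, μ j * ‖a j‖ ^ 4 := by
    rw [Finset.mul_sum]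
    refine Finset.sum_le_sum fun j _ ↦ ?_
    have hμj := h.1.1 j
    by_cases hj : ‖a j‖ ≤ s
    · simpa [b, hj] using mul_nonneg hμj (by positivity : 0 ≤ ‖a j‖ ^ 4)
    · simp only [b, hj, if_false]
      calc s ^ 2 * (μ j * ‖a j‖ ^ 2) ≤ ‖a j‖ ^ 2 * (μ j * ‖a j‖ ^ 2) := by
            gcongr; exact (not_le.1 hj).le
        _ = μ j * ‖a j‖ ^ 4 := by ring
  have hlarge : s * ‖U b‖ ≤ √(Q * ∑ j, μ j * ‖a j‖ ^ 4) := by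
    refine Real.le_sqrt_of_sq_le ?_
    calc (s * ‖U b‖) ^ 2 = s ^ 2 * ‖U b‖ ^ 2 := mul_pow ..
      _ ≤ s ^ 2 * (Q * ∑ j, μ j * ‖b j‖ ^ 2) := by gcongr; exact h.2 b
      _ = Q * (s ^ 2 * ∑ j, μ j * ‖b j‖ ^ 2) := by ring
      _ ≤ Q * ∑ j, μ j * ‖a j‖ ^ 4 := by gcongr
  calc s * ‖U a‖ = s * ‖U (a - b) + U b‖ := by rw [← map_add, sub_add_cancel]
    _ ≤ s * ‖U (a - b)‖ + s * ‖U b‖ := by rw [← mul_add]; gcongr; exact norm_add_le _ _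
    _ ≤ s * (‖U‖ * s) + √(Q * ∑ j, μ j * ‖a j‖ ^ 4) := by gcongr
    _ = ‖U‖ * s ^ 2 + √(Q * ∑ j, μ j * ‖a j‖ ^ 4) := by ring

/-- Interpolation between `‖U‖` and the Pietsch bound, by optimizing the truncation level. -/
lemma IsPietschMeasure.norm_apply_pow_four_le (h : IsPietschMeasure U Q μ) (hQ : 0 ≤ Q)
    (a : ι → 𝕜) : ‖U a‖ ^ 4 ≤ 16 * ‖U‖ ^ 2 * Q * ∑ j, μ j * ‖a j‖ ^ 4 := by
  have hsum : 0 ≤ ∑ j, μ j * ‖a j‖ ^ 4 :=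
    Finset.sum_nonneg fun j _ ↦ mul_nonneg (h.1.1 j) (by positivity)
  set R := √(Q * ∑ j, μ j * ‖a j‖ ^ 4) with hR
  have hdiscrim : discrim ‖U‖ (-‖U a‖) R ≤ 0 := by
    refine discrim_le_zero fun s ↦ ?_
    rcases le_total 0 s with hs | hs
    · linarith [h.mul_norm_apply_le hQ hs a]
    · linarith [mul_nonpos_of_nonpos_of_nonneg hs (norm_nonneg (U a)),
        mul_nonneg (norm_nonneg U) (mul_self_nonneg s), Real.sqrt_nonneg
          (Q * ∑ j, μ j * ‖a j‖ ^ 4)]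
  have hsq : ‖U a‖ ^ 2 ≤ 4 * ‖U‖ * R := by
    rw [discrim, neg_sq] at hdiscrim
    linarith
  calc ‖U a‖ ^ 4 = (‖U a‖ ^ 2) ^ 2 := by ring
    _ ≤ (4 * ‖U‖ * R) ^ 2 := by gcongr
    _ = 16 * ‖U‖ ^ 2 * Q * ∑ j, μ j * ‖a j‖ ^ 4 := by
      rw [mul_pow, hR, Real.sq_sqrt (by positivity)]; ring

lemma IsPietschMeasure.expect_norm_signedSum_pow_four_le (h : IsPietschMeasure U Q μ)
    (hQ : 0 ≤ Q) {N : ℕ} (a : Fin N → ι → 𝕜) :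
    𝔼 ε, ‖signedSum ε fun k ↦ U (a k)‖ ^ 4
      ≤ 48 * ‖U‖ ^ 2 * Q * ‖fun j ↦ ∑ k, ‖a k j‖ ^ 2‖ ^ 2 := by
  set w : ι → ℝ := fun j ↦ ∑ k, ‖a k j‖ ^ 2
  have hcoord : ∀ j, 𝔼 ε : Fin N → Bool, ‖signedSum ε a j‖ ^ 4 ≤ 3 * ‖w‖ ^ 2 := fun j ↦ by
    simp only [signedSum_apply]
    refine (_root_.expect_norm_signedSum_pow_four_le 𝕜 fun k ↦ a k j).trans ?_
    gcongr
    exact (le_abs_self _).trans (norm_le_pi_norm w j)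
  calc 𝔼 ε, ‖signedSum ε fun k ↦ U (a k)‖ ^ 4
      ≤ 𝔼 ε : Fin N → Bool, 16 * ‖U‖ ^ 2 * Q * ∑ j, μ j * ‖signedSum ε a j‖ ^ 4 :=
        Finset.expect_le_expect fun ε _ ↦ by
          rw [← map_signedSum]
          exact h.norm_apply_pow_four_le hQ _
    _ = 16 * ‖U‖ ^ 2 * Q * ∑ j, μ j * 𝔼 ε : Fin N → Bool, ‖signedSum ε a j‖ ^ 4 := by
        simp_rw [← Finset.mul_expect, Finset.expect_sum_comm, ← Finset.mul_expect]
    _ ≤ 16 * ‖U‖ ^ 2 * Q * ∑ j, μ j * (3 * ‖w‖ ^ 2) := by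
        gcongr with j
        · exact h.1.1 j
        · exact hcoord j
    _ = 48 * ‖U‖ ^ 2 * Q * ‖w‖ ^ 2 := by rw [← Finset.sum_mul, h.1.2]; ring

lemma IsPietschMeasure.isTwoSummingBound_sqrt (h : IsPietschMeasure U Q μ) (hQ : 0 ≤ Q)
    (hC : IsCotype2Bound E C) : IsTwoSummingBound U √(48 * C ^ 2 * ‖U‖ ^ 2 * Q) := by
  intro N a
  set w : ι → ℝ := fun j ↦ ∑ k, ‖a k j‖ ^ 2
  set z : (Fin N → Bool) → E := fun ε ↦ signedSum ε fun k ↦ U (a k)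
  have hJensen : (𝔼 ε, ‖z ε‖ ^ 2) ^ 2 ≤ 𝔼 ε, ‖z ε‖ ^ 4 := by
    have hCS := Finset.expect_mul_sq_le_sq_mul_sq Finset.univ (fun ε ↦ ‖z ε‖ ^ 2)
      fun _ ↦ (1 : ℝ)
    simp only [mul_one, one_pow, Fintype.expect_const] at hCS
    exact hCS.trans_eq (Finset.expect_congr rfl fun ε _ ↦ by ring)
  refine le_of_sq_le_sq ?_ (by positivity)
  calc (∑ k, ‖U (a k)‖ ^ 2) ^ 2 ≤ (C * 𝔼 ε, ‖z ε‖ ^ 2) ^ 2 := by gcongr; exact hC N _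
    _ = C ^ 2 * (𝔼 ε, ‖z ε‖ ^ 2) ^ 2 := mul_pow ..
    _ ≤ C ^ 2 * (48 * ‖U‖ ^ 2 * Q * ‖w‖ ^ 2) := by
        gcongr
        exact hJensen.trans (h.expect_norm_signedSum_pow_four_le hQ a)
    _ = (√(48 * C ^ 2 * ‖U‖ ^ 2 * Q) * ‖w‖) ^ 2 := by
        rw [mul_pow, Real.sq_sqrt (by positivity)]; ring

/-- The least 2-summing bound `Q` satisfies `Q ≤ √(48 C² ‖U‖² Q)`. -/
lemma IsCotype2Bound.isTwoSummingBound [Nonempty ι] (hC : IsCotype2Bound E C)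
    (U : (ι → 𝕜) →L[𝕜] E) : IsTwoSummingBound U (48 * C ^ 2 * ‖U‖ ^ 2) := by
  obtain ⟨Q, ⟨hQ, hQU⟩, hmin⟩ := exists_isLeast_isTwoSummingBound U
  obtain ⟨μ, hμ⟩ := hQU.exists_isPietschMeasure
  have hself : Q ≤ √(48 * C ^ 2 * ‖U‖ ^ 2 * Q) :=
    hmin ⟨Real.sqrt_nonneg _, hμ.isTwoSummingBound_sqrt hQ hC⟩
  refine hQU.mono ?_
  rcases hQ.eq_or_lt with rfl | hQpos
  · positivity
  · rw [Real.le_sqrt hQ (by positivity), sq] at hself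
    exact le_of_mul_le_mul_right hself hQpos

end TwoSumming

section WeakNorm

variable {𝕜 : Type*} [RCLike 𝕜] {E : Type*} [NormedAddCommGroup E] [NormedSpace 𝕜 E] {m : ℕ}

lemma weakNorm_nonneg (r : ℝ) (x : Fin m → E) : 0 ≤ weakNorm 𝕜 r x :=
  Real.iSup_nonneg fun φ ↦ by positivity

lemma weakNorm_le {r B : ℝ} {x : Fin m → E}
    (h : ∀ φ : E →L[𝕜] 𝕜, ‖φ‖ ≤ 1 → (∑ j, ‖φ (x j)‖ ^ r) ^ (1 / r) ≤ B) :
    weakNorm 𝕜 r x ≤ B :=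
  have : Nonempty {φ : E →L[𝕜] 𝕜 // ‖φ‖ ≤ 1} := ⟨⟨0, by simp⟩⟩
  ciSup_le fun φ ↦ h φ.1 φ.2

lemma le_weakNorm {r : ℝ} (hr : 0 < r) (x : Fin m → E) {φ : E →L[𝕜] 𝕜} (hφ : ‖φ‖ ≤ 1) :
    (∑ j, ‖φ (x j)‖ ^ r) ^ (1 / r) ≤ weakNorm 𝕜 r x := by
  refine le_ciSup (f := fun φ : {φ : E →L[𝕜] 𝕜 // ‖φ‖ ≤ 1} ↦ (∑ j, ‖φ.1 (x j)‖ ^ r) ^ (1 / r))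
    ⟨(∑ j, ‖x j‖ ^ r) ^ (1 / r), ?_⟩ ⟨φ, hφ⟩
  rintro _ ⟨ψ, rfl⟩
  dsimp only
  gcongr with j
  simpa using ψ.1.le_of_opNorm_le ψ.2 (x j)

lemma norm_sum_smul_le_weakNorm_one (a : Fin m → 𝕜) (x : Fin m → E) :
    ‖∑ j, a j • x j‖ ≤ weakNorm 𝕜 1 x * ‖a‖ := by
  obtain ⟨φ, hφ, hφx⟩ := exists_dual_vector'' 𝕜 (∑ j, a j • x j)
  have hweak : ∑ j, ‖φ (x j)‖ ≤ weakNorm 𝕜 1 x := by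
    simpa only [Real.rpow_one, div_one] using le_weakNorm one_pos x hφ
  calc ‖∑ j, a j • x j‖ = ‖φ (∑ j, a j • x j)‖ := by rw [hφx, RCLike.norm_ofReal, abs_norm]
    _ = ‖∑ j, a j * φ (x j)‖ := by simp only [map_sum, map_smul, smul_eq_mul]
    _ ≤ ∑ j, ‖φ (x j)‖ * ‖a‖ := norm_sum_le_of_le _ fun j _ ↦ by
        rw [norm_mul, mul_comm]
        gcongr
        exact norm_le_pi_norm a j
    _ ≤ weakNorm 𝕜 1 x * ‖a‖ := by rw [← Finset.sum_mul]; gcongr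

lemma weakNorm_two_le_sqrt {Q : ℝ} {y : Fin m → E}
    (h : ∀ b : Fin m → 𝕜, ‖∑ j, b j • y j‖ ^ 2 ≤ Q * ∑ j, ‖b j‖ ^ 2) : weakNorm 𝕜 2 y ≤ √Q := by
  refine weakNorm_le fun φ hφ ↦ ?_
  rw [← Real.sqrt_eq_rpow]
  simp only [Real.rpow_two]
  set D := ∑ j, ‖φ (y j)‖ ^ 2 with hD
  set b : Fin m → 𝕜 := fun j ↦ starRingEnd 𝕜 (φ (y j)) with hb
  have hD_le : D ≤ ‖∑ j, b j • y j‖ := by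
    have hφb : φ (∑ j, b j • y j) = (D : 𝕜) := by
      simp [hb, hD, RCLike.conj_mul]
    calc D ≤ ‖φ (∑ j, b j • y j)‖ := by rw [hφb, RCLike.norm_ofReal]; exact le_abs_self D
      _ ≤ ‖∑ j, b j • y j‖ := by simpa using φ.le_of_opNorm_le hφ (∑ j, b j • y j)
  have hD_sq : D ^ 2 ≤ Q * D := by
    calc D ^ 2 ≤ ‖∑ j, b j • y j‖ ^ 2 := by gcongr
      _ ≤ Q * ∑ j, ‖b j‖ ^ 2 := h b
      _ = Q * D := by simp only [hb, RCLike.norm_conj, hD]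
  have hD_nonneg : 0 ≤ D := by positivity
  rcases hD_nonneg.eq_or_lt with hD0 | hD_pos
  · rw [← hD0, Real.sqrt_zero]
    exact Real.sqrt_nonneg Q
  · exact Real.sqrt_le_sqrt (le_of_mul_le_mul_right (sq D ▸ hD_sq) hD_pos)

end WeakNorm

section Factorization

variable {𝕜 : Type*} [RCLike 𝕜] {E : Type*} [NormedAddCommGroup E] [NormedSpace 𝕜 E] {m : ℕ}

lemma IsCotype2Bound.exists_sq_norm_sum_smul_le {C : ℝ} (hC : IsCotype2Bound E C)
    (x : Fin m → E) :
    ∃ l : Fin m → ℝ, (∀ j, 0 ≤ l j) ∧ ∑ j, l j ^ 2 ≤ weakNorm 𝕜 1 x ^ 2 ∧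
      ∀ a : Fin m → 𝕜, ‖∑ j, a j • x j‖ ^ 2 ≤ 48 * C ^ 2 * ∑ j, (l j * ‖a j‖) ^ 2 := by
  rcases isEmpty_or_nonempty (Fin m) with _ | _
  · exact ⟨0, by simp, by simp [sq_nonneg], by simp⟩
  set W := weakNorm 𝕜 1 x
  have hW : 0 ≤ W := weakNorm_nonneg 1 x
  have hU_le : ∀ a, ‖Fintype.linearCombination 𝕜 x a‖ ≤ W * ‖a‖ := fun a ↦ by
    rw [Fintype.linearCombination_apply]
    exact norm_sum_smul_le_weakNorm_one a x
  set U := (Fintype.linearCombination 𝕜 x).mkContinuous W hU_le with hU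
  obtain ⟨μ, hμ, hμU⟩ := (hC.isTwoSummingBound U).exists_isPietschMeasure
  refine ⟨fun j ↦ W * √(μ j), fun j ↦ by positivity, ?_, fun a ↦ ?_⟩
  · simp only [mul_pow, Real.sq_sqrt (hμ.1 _), ← Finset.mul_sum, hμ.2, mul_one, le_refl]
  · calc ‖∑ j, a j • x j‖ ^ 2 = ‖U a‖ ^ 2 := by
          rw [hU, LinearMap.mkContinuous_apply, Fintype.linearCombination_apply]
      _ ≤ 48 * C ^ 2 * ‖U‖ ^ 2 * ∑ j, μ j * ‖a j‖ ^ 2 := hμU a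
      _ ≤ 48 * C ^ 2 * W ^ 2 * ∑ j, μ j * ‖a j‖ ^ 2 := by
          gcongr
          · exact Finset.sum_nonneg fun j _ ↦ mul_nonneg (hμ.1 j) (by positivity)
          · exact LinearMap.mkContinuous_norm_le _ hW hU_le
      _ = 48 * C ^ 2 * ∑ j, (W * √(μ j) * ‖a j‖) ^ 2 := by
          simp only [mul_pow, Real.sq_sqrt (hμ.1 _), mul_assoc, Finset.mul_sum]

variable (𝕜 E) in
/-- The factorization `ℓ_r^w(E) = ℓ_t · ℓ_s^w(E)`, uniformly over finite families: every family
is the product of nonnegative scalars, whose `ℓ_t` norm is at most the weak `ℓ_r` norm of the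
family, with a family whose weak `ℓ_s` norm is bounded by a constant. -/
def HasWeakFactorization (r s t : ℝ) : Prop :=
  ∃ K > 0, ∀ (m : ℕ) (x : Fin m → E), ∃ (l : Fin m → ℝ) (y : Fin m → E), (∀ j, 0 ≤ l j) ∧
    (∀ j, x j = (l j : 𝕜) • y j) ∧ (∑ j, l j ^ t) ^ (1 / t) ≤ weakNorm 𝕜 r x ∧
      weakNorm 𝕜 s y ≤ K

lemma HasCotype2.hasWeakFactorization (h : HasCotype2 E) : HasWeakFactorization 𝕜 E 1 2 2 := by
  obtain ⟨C, hCpos, hC⟩ := h.exists_isCotype2Bound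
  refine ⟨√(48 * C ^ 2), by positivity, fun m x ↦ ?_⟩
  obtain ⟨l, hl, hlx, hl_dom⟩ := hC.exists_sq_norm_sum_smul_le (𝕜 := 𝕜) x
  refine ⟨l, fun j ↦ ((l j : 𝕜)⁻¹) • x j, hl, fun j ↦ ?_, ?_, weakNorm_two_le_sqrt fun b ↦ ?_⟩
  · rcases eq_or_ne (l j) 0 with hj | hj
    · have hxj : ‖x j‖ ^ 2 ≤ 0 := by
        simpa [Pi.single_apply, hj, ite_and, apply_ite] using hl_dom (Pi.single j 1)
      have hxj0 : x j = 0 := by simpa using hxj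
      simp [hxj0]
    · rw [smul_inv_smul₀ (RCLike.ofReal_ne_zero.2 hj)]
  · simp only [Real.rpow_two, ← Real.sqrt_eq_rpow]
    exact Real.sqrt_le_iff.2 ⟨weakNorm_nonneg 1 x, hlx⟩
  · calc ‖∑ j, b j • (l j : 𝕜)⁻¹ • x j‖ ^ 2
        ≤ 48 * C ^ 2 * ∑ j, (l j * ‖b j * (l j : 𝕜)⁻¹‖) ^ 2 := by
          simpa only [smul_smul] using hl_dom fun j ↦ b j * (l j : 𝕜)⁻¹
      _ ≤ 48 * C ^ 2 * ∑ j, ‖b j‖ ^ 2 := by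
          gcongr with j
          · exact mul_nonneg (hl j) (norm_nonneg _)
          rw [norm_mul, norm_inv, RCLike.norm_of_nonneg (hl j), mul_left_comm]
          exact mul_le_of_le_one_right (norm_nonneg _) mul_inv_le_one

end Factorization

section Holder

lemma rpow_sum_mul_le_of_holderTriple {κ : Type*} [Fintype κ] {p q r : ℝ}
    (h : p.HolderTriple q r) {f g : κ → ℝ} (hf : ∀ j, 0 ≤ f j) (hg : ∀ j, 0 ≤ g j) :
    (∑ j, (f j * g j) ^ r) ^ (1 / r)
      ≤ (∑ j, f j ^ p) ^ (1 / p) * (∑ j, g j ^ q) ^ (1 / q) := by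
  have hr : 0 < r := h.pos'
  have hf_sum : 0 ≤ ∑ j, f j ^ p := Finset.sum_nonneg fun j _ ↦ Real.rpow_nonneg (hf j) p
  have hg_sum : 0 ≤ ∑ j, g j ^ q := Finset.sum_nonneg fun j _ ↦ Real.rpow_nonneg (hg j) q
  calc (∑ j, (f j * g j) ^ r) ^ (1 / r)
      ≤ ((∑ j, f j ^ p) ^ (r / p) * (∑ j, g j ^ q) ^ (r / q)) ^ (1 / r) := by
        gcongr
        · exact Finset.sum_nonneg fun j _ ↦ Real.rpow_nonneg (mul_nonneg (hf j) (hg j)) r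
        · exact Real.Lr_rpow_le_Lp_mul_Lq_of_nonneg _ h (fun j _ ↦ hf j) fun j _ ↦ hg j
    _ = (∑ j, f j ^ p) ^ (1 / p) * (∑ j, g j ^ q) ^ (1 / q) := by
        rw [Real.mul_rpow (by positivity) (by positivity), ← Real.rpow_mul hf_sum,
          ← Real.rpow_mul hg_sum]
        congr 2 <;> field_simp

lemma inv_add_sum_inv_pos {ι : Type*} {s : Finset ι} {t : ι → ℝ} {q : ℝ} (hq : 0 < q)
    (ht : ∀ i ∈ s, 0 < t i) : 0 < q⁻¹ + ∑ i ∈ s, (t i)⁻¹ :=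
  add_pos_of_pos_of_nonneg (inv_pos.2 hq)
    (Finset.sum_nonneg fun i hi ↦ (inv_pos.2 (ht i hi)).le)

lemma rpow_sum_prod_mul_le {ι κ : Type*} [Fintype κ] (s : Finset ι) {t : ι → ℝ} {p q : ℝ}
    (ht : ∀ i ∈ s, 0 < t i) (hq : 0 < q) (hpq : p⁻¹ = q⁻¹ + ∑ i ∈ s, (t i)⁻¹) {l : ι → κ → ℝ}
    (hl : ∀ i ∈ s, ∀ j, 0 ≤ l i j) {a : κ → ℝ} (ha : ∀ j, 0 ≤ a j) :
    (∑ j, ((∏ i ∈ s, l i j) * a j) ^ p) ^ (1 / p)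
      ≤ (∏ i ∈ s, (∑ j, l i j ^ t i) ^ (1 / t i)) * (∑ j, a j ^ q) ^ (1 / q) := by
  classical
  induction s using Finset.induction_on generalizing p with
  | empty =>
    obtain rfl : p = q := by simpa using hpq
    simp
  | insert i s hi ih =>
    simp only [Finset.forall_mem_insert] at ht hl
    set p' := (q⁻¹ + ∑ i ∈ s, (t i)⁻¹)⁻¹ with hp'
    have hp'_pos : 0 < p' := inv_pos.2 (inv_add_sum_inv_pos hq ht.2)
    have hHolder : (t i).HolderTriple p' p := by
      refine ⟨?_, ht.1, hp'_pos⟩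
      rw [hpq, Finset.sum_insert hi, hp', inv_inv]
      ring
    simp only [Finset.prod_insert hi, mul_assoc]
    refine (rpow_sum_mul_le_of_holderTriple hHolder hl.1 fun j ↦
      mul_nonneg (Finset.prod_nonneg fun i hi ↦ hl.2 i hi j) (ha j)).trans ?_
    gcongr
    · exact Real.rpow_nonneg (Finset.sum_nonneg fun j _ ↦ Real.rpow_nonneg (hl.1 j) _) _
    · exact ih ht.2 (by rw [hp', inv_inv]) hl.2

variable {𝕜 : Type*} [RCLike 𝕜]

lemma weakNorm_smul_le {E : Type*} [NormedAddCommGroup E] [NormedSpace 𝕜 E] {m : ℕ}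
    {r s t : ℝ} (h : t.HolderTriple s r) {l : Fin m → ℝ} (hl : ∀ j, 0 ≤ l j) (x : Fin m → E) :
    weakNorm 𝕜 r (fun j ↦ (l j : 𝕜) • x j) ≤ (∑ j, l j ^ t) ^ (1 / t) * weakNorm 𝕜 s x := by
  refine weakNorm_le fun φ hφ ↦ ?_
  simp only [map_smul, smul_eq_mul, norm_mul, RCLike.norm_of_nonneg (hl _)]
  refine (rpow_sum_mul_le_of_holderTriple h hl fun j ↦ norm_nonneg _).trans ?_
  gcongr
  · exact Real.rpow_nonneg (Finset.sum_nonneg fun j _ ↦ Real.rpow_nonneg (hl j) _) _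
  · exact le_weakNorm h.right_pos x hφ

variable {n : ℕ} {E : Fin n → Type*} [∀ i, NormedAddCommGroup (E i)] [∀ i, NormedSpace 𝕜 (E i)]
  {F : Type*} [NormedAddCommGroup F] [NormedSpace 𝕜 F] {A : ContinuousMultilinearMap 𝕜 E F}
  {p q : ℝ} {r s t : Fin n → ℝ}

lemma norm_map_smul_eq_prod_mul {l : Fin n → ℝ} (hl : ∀ i, 0 ≤ l i) (x : ∀ i, E i) :
    ‖A fun i ↦ (l i : 𝕜) • x i‖ = (∏ i, l i) * ‖A x‖ := by
  simp only [A.map_smul_univ, norm_smul, norm_prod, RCLike.norm_of_nonneg (hl _)]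

lemma norm_map_norm_rpow_smul_rpow (ht : ∀ i, 0 < t i) (hq : 0 < q)
    (hpq : p⁻¹ = q⁻¹ + ∑ i, (t i)⁻¹) (x : ∀ i, E i) :
    ‖A fun i ↦ ((‖A x‖ ^ (q / t i) : ℝ) : 𝕜) • x i‖ ^ p = ‖A x‖ ^ q := by
  have hp : 0 < p := inv_pos.1 (hpq ▸ inv_add_sum_inv_pos hq fun i _ ↦ ht i)
  have hexp : ∑ i, q / t i + 1 = q / p := by
    simp only [div_eq_mul_inv, hpq, ← Finset.mul_sum]
    rw [mul_add, mul_inv_cancel₀ hq.ne', add_comm]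
  rw [norm_map_smul_eq_prod_mul fun i ↦ by positivity,
    ← Real.rpow_sum_of_nonneg (norm_nonneg _) fun i _ ↦ (div_pos hq (ht i)).le,
    ← Real.rpow_add_one' (norm_nonneg _) (by rw [hexp]; positivity), hexp,
    ← Real.rpow_mul (norm_nonneg _), div_mul_cancel₀ _ hp.ne']

/-- Test the summability of `A` on the families `‖A x_j‖ ^ (q / tᵢ) • x_j^i`. -/
lemma IsAbsSumming.of_holderTriple (h : IsAbsSumming p r A)
    (hrst : ∀ i, (t i).HolderTriple (s i) (r i)) (hq : 0 < q)
    (hpq : p⁻¹ = q⁻¹ + ∑ i, (t i)⁻¹) : IsAbsSumming q s A := by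
  obtain ⟨C, hC, h⟩ := h
  refine ⟨C, hC, fun m x ↦ ?_⟩
  have ht : ∀ i, 0 < t i := fun i ↦ (hrst i).left_pos
  set S := ∑ j, ‖A fun i ↦ x i j‖ ^ q with hS
  have hS_nonneg : 0 ≤ S := by positivity
  have hweak_nonneg : 0 ≤ ∏ i, weakNorm 𝕜 (s i) (x i) :=
    Finset.prod_nonneg fun i _ ↦ weakNorm_nonneg _ _
  rcases hS_nonneg.eq_or_lt with hS0 | hS_pos
  · rw [← hS0, Real.zero_rpow (by positivity)]
    positivity
  set l : Fin n → Fin m → ℝ := fun i j ↦ ‖A fun i ↦ x i j‖ ^ (q / t i)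
  have hl : ∀ i j, 0 ≤ l i j := fun i j ↦ by positivity
  have hweak : ∀ i, weakNorm 𝕜 (r i) (fun j ↦ (l i j : 𝕜) • x i j)
      ≤ S ^ (t i)⁻¹ * weakNorm 𝕜 (s i) (x i) := fun i ↦ by
    refine (weakNorm_smul_le (hrst i) (hl i) (x i)).trans_eq ?_
    simp only [l, ← Real.rpow_mul (norm_nonneg _), div_mul_cancel₀ _ (ht i).ne', one_div, hS]
  refine le_of_mul_le_mul_left ?_ (Real.rpow_pos_of_pos hS_pos (∑ i, (t i)⁻¹))
  calc S ^ (∑ i, (t i)⁻¹) * S ^ (1 / q) = S ^ (1 / p) := by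
        rw [← Real.rpow_add hS_pos, one_div, one_div, hpq, add_comm]
    _ = (∑ j, ‖A fun i ↦ (l i j : 𝕜) • x i j‖ ^ p) ^ (1 / p) := by
        simp only [l, norm_map_norm_rpow_smul_rpow ht hq hpq, hS]
    _ ≤ C * ∏ i, weakNorm 𝕜 (r i) fun j ↦ (l i j : 𝕜) • x i j := h m _
    _ ≤ C * ∏ i, (S ^ (t i)⁻¹ * weakNorm 𝕜 (s i) (x i)) := by
        gcongr with i
        · exact fun i _ ↦ weakNorm_nonneg _ _
        · exact hweak i
    _ = S ^ (∑ i, (t i)⁻¹) * (C * ∏ i, weakNorm 𝕜 (s i) (x i)) := by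
        rw [Finset.prod_mul_distrib, ← Real.rpow_sum_of_pos hS_pos]
        ring

lemma IsAbsSumming.of_hasWeakFactorization (h : IsAbsSumming q s A)
    (hE : ∀ i, HasWeakFactorization 𝕜 (E i) (r i) (s i) (t i)) (ht : ∀ i, 0 < t i) (hq : 0 < q)
    (hpq : p⁻¹ = q⁻¹ + ∑ i, (t i)⁻¹) : IsAbsSumming p r A := by
  obtain ⟨C, hC, h⟩ := h
  choose K hK hfac using hE
  refine ⟨C * ∏ i, K i, mul_pos hC (Finset.prod_pos fun i _ ↦ hK i), fun m x ↦ ?_⟩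
  choose l y hl hxy hlx hy using fun i ↦ hfac i m (x i)
  calc (∑ j, ‖A fun i ↦ x i j‖ ^ p) ^ (1 / p)
      = (∑ j, ((∏ i, l i j) * ‖A fun i ↦ y i j‖) ^ p) ^ (1 / p) := by
        simp only [hxy, norm_map_smul_eq_prod_mul fun i ↦ hl i _]
    _ ≤ (∏ i, (∑ j, l i j ^ t i) ^ (1 / t i)) * (∑ j, ‖A fun i ↦ y i j‖ ^ q) ^ (1 / q) :=
        rpow_sum_prod_mul_le _ (fun i _ ↦ ht i) hq hpq (fun i _ ↦ hl i) fun j ↦ norm_nonneg _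
    _ ≤ (∏ i, weakNorm 𝕜 (r i) (x i)) * (C * ∏ i, K i) := by
        gcongr with i
        · exact Finset.prod_nonneg fun i _ ↦ weakNorm_nonneg _ _
        · exact fun i _ ↦ Real.rpow_nonneg
            (Finset.sum_nonneg fun j _ ↦ Real.rpow_nonneg (hl i j) _) _
        · exact hlx i
        · refine (h m y).trans ?_
          gcongr with i
          · exact fun i _ ↦ weakNorm_nonneg _ _
          · exact hy i
    _ = C * (∏ i, K i) * ∏ i, weakNorm 𝕜 (r i) (x i) := mul_comm _ _

end Holder

theorem cotype2_summing_equiv_general {𝕜 : Type*} [RCLike 𝕜] {n : ℕ} {E : Fin n → Type*}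
    [∀ i, NormedAddCommGroup (E i)] [∀ i, NormedSpace 𝕜 (E i)] (hcot : ∀ i, HasCotype2 (E i))
    {F : Type*} [NormedAddCommGroup F] [NormedSpace 𝕜 F] (A : ContinuousMultilinearMap 𝕜 E F)
    {p q : ℝ} (hq : 0 < q) (hpq : p⁻¹ = q⁻¹ + n / 2) :
    IsAbsSumming p (fun _ ↦ 1) A ↔ IsAbsSumming q (fun _ ↦ 2) A := by
  have hpq' : p⁻¹ = q⁻¹ + ∑ _i : Fin n, (2 : ℝ)⁻¹ := by
    rw [hpq, Fin.sum_const, nsmul_eq_mul, div_eq_mul_inv]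
  exact ⟨fun h ↦ h.of_holderTriple (fun _ ↦ Real.HolderConjugate.two_two) hq hpq',
    fun h ↦ h.of_hasWeakFactorization (fun i ↦ (hcot i).hasWeakFactorization)
      (fun _ ↦ two_pos) hq hpq'⟩

/-- If `E₁, …, Eₙ` have cotype 2, then for every Banach space `F` a continuous `n`-linear map
`A : E₁ × ⋯ × Eₙ → F` is absolutely `(1/n; 1, …, 1)`-summing iff it is absolutely
`(2/n; 2, …, 2)`-summing. -/
theorem cotype2_summing_equiv {𝕜 : Type*} [RCLike 𝕜] {n : ℕ} (hn : 1 ≤ n)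
    (E : Fin n → Type*) [∀ i, NormedAddCommGroup (E i)] [∀ i, NormedSpace 𝕜 (E i)]
    [∀ i, CompleteSpace (E i)] (hcot : ∀ i, HasCotype2 (E i))
    (F : Type*) [NormedAddCommGroup F] [NormedSpace 𝕜 F] [CompleteSpace F]
    (A : ContinuousMultilinearMap 𝕜 E F) :
    IsAbsSumming (1 / (n : ℝ)) (fun _ => 1) A ↔ IsAbsSumming (2 / (n : ℝ)) (fun _ => 2) A :=
  cotype2_summing_equiv_general hcot A (by positivity) (by rw [one_div, inv_inv, inv_div]; ring)
end
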